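/- arXiv:0911.0996 — 2 statements merged into one kernel-verified Lean document; each statement's English description precedes it below -/
import Mathlib

section
/- Fix κ ≥ 1 and suppose the following conjecture holds: for every N, every d ≥ 1, and every real polynomial p of degree at most d with 0 ≤ p(X) ≤ 1 for all X ∈ {0,1}^N and Vr[p] > 0, there exists i ∈ [N] with Inf_i[p] ≥ (Vr[p]/d)^κ. Then there exists a constant C = C(κ) such that for every T-query quantum algorithm on Boolean inputs with acceptance probability p, and all ε, δ ∈ (0,1), there is a deterministic decision tree on {0,1}^N of depth at most (2 + T/(εδ))^C with real-valued leaf labels whose output p̃ satisfies |p̃(X) − p(X)| ≤ ε for at least a (1−δ) fraction of the inputs X ∈ {0,1}^N. -/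
/-!
The acceptance probability `f` of a `T`-query algorithm is a real polynomial of degree at most
`2T` on the cube, with values in `[0,1]` (`acc_isDeg`, `acc_mem`). Its total squared influence
`J f = ∑ i, ∑ X, (f X - f (X^i))²` (not normalised by `2 ^ N`) is at most `16 T² 2 ^ N`
(`totInf_acc_le`). This is the hybrid argument: flipping `x_i` moves the final state by at most
`2 ∑ t, √(m_i^t(X))`, where `m_i^t(X)` is the squared amplitude that query `t + 1` places on index
`i`, and these masses sum to `1` over `i`.

The decision tree greedily queries an influential variable. If the `L₁`-variance of the current
restriction is at most `η = εδ/2`, the tree answers with the mean, and by Markov's inequality errs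
on at most a `δ/2` fraction of the inputs. Otherwise the conjecture provides a variable `i` of
`L₁`-influence at least `τ = (η/d)^κ`, where `d = 2T + 1`, hence of squared influence at least
`τ²` by Cauchy–Schwarz. Averaged over the two answers to the query `x_i`, the restrictions have total
squared influence exactly `J f` minus the contribution of `i`, so `J` acts as a potential. After
`k` queries the fraction `β` of inputs with a wrong answer satisfies
`k τ² (β - δ/2) ≤ J f / 2 ^ N` (`exists_tree`). With `k` slightly above `32 T² / (τ² δ)` this
gives `β ≤ δ`, and such a `k` is polynomial in `2 + T/(εδ)`.
-/

open scoped BigOperators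

/-- The phase oracle for a Boolean input `X ∈ {0,1}^N`: the diagonal unitary with
`O_X (e_i ⊗ e_w) = (-1)^{x_i} e_i ⊗ e_w`. -/
noncomputable def phaseOracle {N W : ℕ} (X : Fin N → Bool) :
    Matrix (Fin N × Fin W) (Fin N × Fin W) ℂ :=
  Matrix.diagonal fun p => if X p.1 then -1 else 1

/-- A quantum query algorithm on Boolean inputs `X ∈ {0,1}^N`, with workspace dimension `W`:
an initial unit vector, unitaries `U 0, U 1, …`, and an orthogonal projection. -/
structure BAlg (N W : ℕ) : Type where
  init : (Fin N × Fin W) → ℂ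
  init_norm : ∑ p, Complex.normSq (init p) = 1
  U : ℕ → Matrix (Fin N × Fin W) (Fin N × Fin W) ℂ
  U_unitary : ∀ t, U t ∈ Matrix.unitaryGroup (Fin N × Fin W) ℂ
  proj : Matrix (Fin N × Fin W) (Fin N × Fin W) ℂ
  proj_herm : proj.IsHermitian
  proj_idem : proj * proj = proj

/-- The state after `t` queries: `ψ = U_t O_X U_{t-1} O_X ⋯ O_X U_0 ψ₀`. -/
noncomputable def BAlg.state {N W : ℕ} (A : BAlg N W) (X : Fin N → Bool) :
    ℕ → (Fin N × Fin W) → ℂ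
  | 0 => (A.U 0).mulVec A.init
  | t + 1 => (A.U (t + 1)).mulVec ((phaseOracle X).mulVec (A.state X t))

/-- The acceptance probability of a `T`-query run on input `X`: `‖Π ψ_X‖²`. -/
noncomputable def BAlg.acc {N W : ℕ} (A : BAlg N W) (T : ℕ) (X : Fin N → Bool) : ℝ :=
  ∑ p, Complex.normSq (A.proj.mulVec (A.state X T) p)

/-- The `L₁`-variance `Vr[g] = E_{X,Y uniform on {0,1}^N} |g(X) − g(Y)|`. -/
noncomputable def bVr {N : ℕ} (g : (Fin N → Bool) → ℝ) : ℝ :=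
  (∑ X : Fin N → Bool, ∑ Y : Fin N → Bool, |g X - g Y|) / (2 ^ N * 2 ^ N)

/-- The influence of variable `i`: `Inf_i[g] = E_X |g(X) − g(X^i)|`. -/
noncomputable def bInf {N : ℕ} (i : Fin N) (g : (Fin N → Bool) → ℝ) : ℝ :=
  (∑ X : Fin N → Bool, |g X - g (Function.update X i (!X i))|) / 2 ^ N

/-- Evaluation of a real polynomial on a point of the Boolean cube `{0,1}^N`. -/
noncomputable def evalB {N : ℕ} (p : MvPolynomial (Fin N) ℝ) (X : Fin N → Bool) : ℝ :=
  MvPolynomial.eval (fun i => if X i then (1 : ℝ) else 0) p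

/-- A deterministic decision tree on `{0,1}^N` with real-valued leaf labels. -/
inductive RTree (N : ℕ) : Type
  | leaf : ℝ → RTree N
  | node : Fin N → RTree N → RTree N → RTree N

/-- Evaluation of a real-leaved decision tree (at a node querying `i`, follow the child
indexed by the answer `x_i`). -/
noncomputable def RTree.eval {N : ℕ} : RTree N → (Fin N → Bool) → ℝ
  | .leaf r, _ => r
  | .node i t0 t1, X => if X i then t1.eval X else t0.eval X

/-- Depth of a real-leaved decision tree: maximum number of queries on a root-to-leaf path. -/
def RTree.depth {N : ℕ} : RTree N → ℕ
  | .leaf _ => 0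
  | .node _ t0 t1 => max t0.depth t1.depth + 1

/-! ### Functions of bounded degree on the cube -/

/-- `f` agrees on the cube with a real polynomial of total degree at most `d`. -/
def IsDeg {N : ℕ} (d : ℕ) (f : (Fin N → Bool) → ℝ) : Prop :=
  ∃ p : MvPolynomial (Fin N) ℝ, p.totalDegree ≤ d ∧ evalB p = f

namespace IsDeg

variable {N : ℕ}

lemma const (d : ℕ) (c : ℝ) : IsDeg d (fun _ : Fin N → Bool => c) :=
  ⟨MvPolynomial.C c, by simp, by ext X; simp [evalB]⟩

lemma mono {d e : ℕ} {f : (Fin N → Bool) → ℝ} (h : IsDeg d f) (hde : d ≤ e) : IsDeg e f := by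
  obtain ⟨p, hp, hf⟩ := h
  exact ⟨p, hp.trans hde, hf⟩

lemma add {d : ℕ} {f g : (Fin N → Bool) → ℝ} (hf : IsDeg d f) (hg : IsDeg d g) :
    IsDeg d (fun X => f X + g X) := by
  obtain ⟨p, hp, rfl⟩ := hf
  obtain ⟨q, hq, rfl⟩ := hg
  exact ⟨p + q, (MvPolynomial.totalDegree_add _ _).trans (max_le hp hq), by
    ext X; simp [evalB]⟩

lemma mul {d e : ℕ} {f g : (Fin N → Bool) → ℝ} (hf : IsDeg d f) (hg : IsDeg e g) :
    IsDeg (d + e) (fun X => f X * g X) := by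
  obtain ⟨p, hp, rfl⟩ := hf
  obtain ⟨q, hq, rfl⟩ := hg
  exact ⟨p * q, (MvPolynomial.totalDegree_mul _ _).trans (add_le_add hp hq), by
    ext X; simp [evalB]⟩

lemma const_mul {d : ℕ} {f : (Fin N → Bool) → ℝ} (c : ℝ) (hf : IsDeg d f) :
    IsDeg d (fun X => c * f X) := by
  simpa using (const 0 c).mul hf

lemma sum {ι : Type*} {d : ℕ} (s : Finset ι) {f : ι → (Fin N → Bool) → ℝ}
    (h : ∀ a ∈ s, IsDeg d (f a)) : IsDeg d (fun X => ∑ a ∈ s, f a X) := by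
  classical
  induction s using Finset.induction_on with
  | empty => simpa using const d 0
  | insert a s ha ih =>
    simp only [Finset.sum_insert ha]
    exact (h a (by simp)).add (ih fun b hb => h b (by simp [hb]))

lemma prod {ι : Type*} (s : Finset ι) {d : ι → ℕ} {f : ι → (Fin N → Bool) → ℝ}
    (h : ∀ a ∈ s, IsDeg (d a) (f a)) : IsDeg (∑ a ∈ s, d a) (fun X => ∏ a ∈ s, f a X) := by
  classical
  induction s using Finset.induction_on with
  | empty => simpa using const 0 1
  | insert a s ha ih =>
    simp only [Finset.sum_insert ha, Finset.prod_insert ha]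
    exact (h a (by simp)).mul (ih fun b hb => h b (by simp [hb]))

lemma pow {d : ℕ} {f : (Fin N → Bool) → ℝ} (h : IsDeg d f) (n : ℕ) :
    IsDeg (n * d) (fun X => f X ^ n) := by
  simpa using prod (Finset.range n) (d := fun _ => d) (f := fun _ => f) fun _ _ => h

lemma coord (i : Fin N) : IsDeg 1 (fun X : Fin N → Bool => if X i then (1 : ℝ) else 0) :=
  ⟨MvPolynomial.X i, by simp, by ext X; simp [evalB]⟩

/-- Fixing the value of one variable does not raise the degree. -/
lemma update {d : ℕ} {f : (Fin N → Bool) → ℝ} (hf : IsDeg d f) (i : Fin N) (b : Bool) :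
    IsDeg d (fun X => f (Function.update X i b)) := by
  obtain ⟨p, hp, rfl⟩ := hf
  simp only [evalB, MvPolynomial.eval_eq]
  refine sum _ fun m hm => const_mul _ ?_
  refine mono (d := ∑ j ∈ m.support, m j * 1) (prod _ fun j _ => pow ?_ _) ?_
  · by_cases hj : j = i
    · subst hj
      simpa using const 1 _
    · simpa [Function.update_of_ne hj] using coord j
  · simpa [Finsupp.sum] using (MvPolynomial.le_totalDegree hm).trans hp

end IsDeg

/-! ### Acceptance probabilities are polynomials in the input -/

/-- The real and imaginary parts of `z` have degree at most `d` on the cube. -/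
def IsCDeg {N : ℕ} (d : ℕ) (z : (Fin N → Bool) → ℂ) : Prop :=
  IsDeg d (fun X => (z X).re) ∧ IsDeg d (fun X => (z X).im)

lemma IsCDeg.mulVec {N d : ℕ} {ι : Type*} [Fintype ι] (M : Matrix ι ι ℂ)
    {v : (Fin N → Bool) → ι → ℂ} (h : ∀ p, IsCDeg d (fun X => v X p)) (p : ι) :
    IsCDeg d (fun X => M.mulVec (v X) p) := by
  constructor
  · simp only [Matrix.mulVec, dotProduct, Complex.re_sum, Complex.mul_re]
    refine IsDeg.sum _ fun q _ => ?_
    simpa [sub_eq_add_neg] using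
      ((h q).1.const_mul (M p q).re).add ((h q).2.const_mul (-(M p q).im))
  · simp only [Matrix.mulVec, dotProduct, Complex.im_sum, Complex.mul_im]
    exact IsDeg.sum _ fun q _ =>
      ((h q).2.const_mul (M p q).re).add ((h q).1.const_mul (M p q).im)

lemma phaseOracle_mulVec {N W : ℕ} (X : Fin N → Bool) (v : Fin N × Fin W → ℂ)
    (p : Fin N × Fin W) :
    (phaseOracle X).mulVec v p = (if X p.1 then -1 else 1) * v p := by
  simp [phaseOracle, Matrix.mulVec_diagonal]

/-- One query multiplies each amplitude by a sign `1 - 2 x_i`, which is linear in the input. -/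
lemma IsCDeg.phaseOracle {N W d : ℕ} {v : (Fin N → Bool) → Fin N × Fin W → ℂ}
    (h : ∀ p, IsCDeg d (fun X => v X p)) (p : Fin N × Fin W) :
    IsCDeg (d + 1) (fun X => (phaseOracle X).mulVec (v X) p) := by
  have hs : IsDeg 1 (fun X : Fin N → Bool => 1 + (-2) * (if X p.1 then (1 : ℝ) else 0)) :=
    (IsDeg.const 1 1).add ((IsDeg.coord p.1).const_mul (-2))
  simp only [phaseOracle_mulVec]
  constructor
  · convert (h p).1.mul hs using 2 with X
    by_cases hX : X p.1 = true <;> norm_num [hX]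
  · convert (h p).2.mul hs using 2 with X
    by_cases hX : X p.1 = true <;> norm_num [hX]

lemma state_isCDeg {N W : ℕ} (A : BAlg N W) (t : ℕ) (p : Fin N × Fin W) :
    IsCDeg t (fun X => A.state X t p) := by
  induction t generalizing p with
  | zero => exact ⟨IsDeg.const 0 ((A.U 0).mulVec A.init p).re,
      IsDeg.const 0 ((A.U 0).mulVec A.init p).im⟩
  | succ t ih => exact IsCDeg.mulVec _ (fun q => IsCDeg.phaseOracle ih q) p

lemma acc_isDeg {N W : ℕ} (A : BAlg N W) (T : ℕ) : IsDeg (2 * T) (A.acc T) := by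
  unfold BAlg.acc
  refine IsDeg.sum _ fun p _ => ?_
  have h := IsCDeg.mulVec A.proj (state_isCDeg A T) p
  simp only [Complex.normSq_apply]
  rw [two_mul]
  exact (h.1.mul h.1).add (h.2.mul h.2)

/-! ### The hybrid argument -/

section Norms

variable {ι : Type*} [Fintype ι]

/-- The squared Euclidean norm of a complex vector. -/
noncomputable def nsq (v : ι → ℂ) : ℝ := ∑ p, Complex.normSq (v p)

/-- The Euclidean norm of a complex vector, as the norm of `EuclideanSpace`. -/
noncomputable def nrm (v : ι → ℂ) : ℝ := ‖(WithLp.toLp 2 v : EuclideanSpace ℂ ι)‖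

lemma nrm_sq (v : ι → ℂ) : nrm v ^ 2 = nsq v := by
  simp [nrm, nsq, EuclideanSpace.norm_sq_eq, Complex.normSq_eq_norm_sq]

lemma nrm_nonneg (v : ι → ℂ) : 0 ≤ nrm v := norm_nonneg _

lemma nsq_nonneg (v : ι → ℂ) : 0 ≤ nsq v := nrm_sq v ▸ sq_nonneg _

lemma nrm_add_le (v w : ι → ℂ) : nrm (v + w) ≤ nrm v + nrm w := by
  simpa [nrm] using norm_add_le (WithLp.toLp 2 v : EuclideanSpace ℂ ι) (WithLp.toLp 2 w)

lemma abs_nrm_sub_le (v w : ι → ℂ) : |nrm v - nrm w| ≤ nrm (v - w) := by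
  simpa [nrm] using abs_norm_sub_norm_le (WithLp.toLp 2 v : EuclideanSpace ℂ ι) (WithLp.toLp 2 w)

lemma nsq_mulVec [DecidableEq ι] (M : Matrix ι ι ℂ) (v : ι → ℂ) :
    (nsq (M.mulVec v) : ℂ) = star v ⬝ᵥ ((M.conjTranspose * M).mulVec v) := by
  rw [← Matrix.mulVec_mulVec, Matrix.dotProduct_mulVec, ← Matrix.star_mulVec]
  simp [nsq, dotProduct, Complex.normSq_eq_conj_mul_self]

lemma nsq_eq [DecidableEq ι] (v : ι → ℂ) : (nsq v : ℂ) = star v ⬝ᵥ v := by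
  simpa using nsq_mulVec (1 : Matrix ι ι ℂ) v

lemma nsq_unitary [DecidableEq ι] {U : Matrix ι ι ℂ} (hU : U ∈ Matrix.unitaryGroup ι ℂ)
    (v : ι → ℂ) : nsq (U.mulVec v) = nsq v := by
  have h := nsq_mulVec U v
  rw [← Matrix.star_eq_conjTranspose, Matrix.mem_unitaryGroup_iff'.mp hU, Matrix.one_mulVec,
    ← nsq_eq] at h
  exact_mod_cast h

/-- A projection does not increase the norm, because
`‖v‖² - ‖P v‖² = ‖(1 - P) v‖²`. -/
lemma nsq_proj_le [DecidableEq ι] {P : Matrix ι ι ℂ} (h1 : P.IsHermitian) (h2 : P * P = P)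
    (v : ι → ℂ) : nsq (P.mulVec v) ≤ nsq v := by
  have hP := nsq_mulVec P v
  have hQ := nsq_mulVec (1 - P) v
  have e : (1 - P).conjTranspose * (1 - P) = 1 - P := by
    rw [Matrix.conjTranspose_sub, h1.eq, Matrix.conjTranspose_one, sub_mul, mul_sub, mul_sub, h2]
    simp
  rw [h1.eq, h2] at hP
  rw [e, Matrix.sub_mulVec, dotProduct_sub, Matrix.one_mulVec, ← nsq_eq, ← hP] at hQ
  have hR : nsq ((1 - P).mulVec v) = nsq v - nsq (P.mulVec v) := by
    rw [Matrix.sub_mulVec, Matrix.one_mulVec]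
    exact_mod_cast hQ
  linarith [nsq_nonneg ((1 - P).mulVec v)]

lemma nrm_le_of_nsq_le {v w : ι → ℂ} (h : nsq v ≤ nsq w) : nrm v ≤ nrm w := by
  rw [← nrm_sq, ← nrm_sq] at h
  exact (sq_le_sq₀ (nrm_nonneg _) (nrm_nonneg _)).mp h

end Norms

section Hybrid

variable {N W : ℕ}

lemma nsq_phaseOracle (X : Fin N → Bool) (v : Fin N × Fin W → ℂ) :
    nsq ((phaseOracle X).mulVec v) = nsq v := by
  unfold nsq
  refine Finset.sum_congr rfl fun p _ => ?_
  rw [phaseOracle_mulVec]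
  split_ifs <;> simp

lemma nsq_state (A : BAlg N W) (X : Fin N → Bool) (t : ℕ) : nsq (A.state X t) = 1 := by
  induction t with
  | zero => rw [BAlg.state, nsq_unitary (A.U_unitary 0)]; exact A.init_norm
  | succ t ih => rw [BAlg.state, nsq_unitary (A.U_unitary _), nsq_phaseOracle, ih]

lemma acc_eq (A : BAlg N W) (T : ℕ) (X : Fin N → Bool) :
    A.acc T X = nsq (A.proj.mulVec (A.state X T)) := rfl

lemma acc_mem (A : BAlg N W) (T : ℕ) (X : Fin N → Bool) : 0 ≤ A.acc T X ∧ A.acc T X ≤ 1 := by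
  rw [acc_eq]
  exact ⟨nsq_nonneg _, (nsq_proj_le A.proj_herm A.proj_idem _).trans (nsq_state A X T).le⟩

/-- The query mass `m_i`: the squared norm of the part of `v` supported on query index `i`. -/
noncomputable def qmass (v : Fin N × Fin W → ℂ) (i : Fin N) : ℝ :=
  ∑ w, Complex.normSq (v (i, w))

lemma sum_qmass (v : Fin N × Fin W → ℂ) : ∑ i, qmass v i = nsq v := by
  simp [qmass, nsq, Fintype.sum_prod_type]

lemma qmass_nonneg (v : Fin N × Fin W → ℂ) (i : Fin N) : 0 ≤ qmass v i :=
  Finset.sum_nonneg fun _ _ => Complex.normSq_nonneg _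

/-- Two oracles that differ only at `i` differ on a state by twice its component at `i`. -/
lemma nsq_oracle_sub (X : Fin N → Bool) (i : Fin N) (v : Fin N × Fin W → ℂ) :
    nsq ((phaseOracle X).mulVec v - (phaseOracle (Function.update X i (!X i))).mulVec v)
      = 4 * qmass v i := by
  unfold nsq qmass
  rw [Fintype.sum_prod_type, Finset.sum_eq_single i, Finset.mul_sum]
  · refine Finset.sum_congr rfl fun w _ => ?_
    simp only [Pi.sub_apply, phaseOracle_mulVec, Function.update_self]
    rw [← sub_mul, map_mul]
    cases X i <;> norm_num [Complex.normSq_apply]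
  · intro j _ hj
    simp [phaseOracle_mulVec, Function.update_of_ne hj]
  · simp

lemma nrm_state_sub_le (A : BAlg N W) (X : Fin N → Bool) (i : Fin N) (t : ℕ) :
    nrm (A.state X t - A.state (Function.update X i (!X i)) t)
      ≤ ∑ s ∈ Finset.range t, 2 * √(qmass (A.state X s) i) := by
  induction t with
  | zero => simp [BAlg.state, nrm]
  | succ t ih =>
    set Y := Function.update X i (!X i) with hY
    rw [Finset.sum_range_succ, BAlg.state, BAlg.state, ← Matrix.mulVec_sub]
    have h1 : nrm ((phaseOracle X).mulVec (A.state X t) - (phaseOracle Y).mulVec (A.state X t))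
        ≤ 2 * √(qmass (A.state X t) i) := by
      refine (sq_le_sq₀ (nrm_nonneg _) (by positivity)).mp ?_
      rw [nrm_sq, hY, nsq_oracle_sub, mul_pow, Real.sq_sqrt (qmass_nonneg _ _)]
      norm_num
    have h2 : nrm ((phaseOracle Y).mulVec (A.state X t - A.state Y t))
        ≤ nrm (A.state X t - A.state Y t) := nrm_le_of_nsq_le (nsq_phaseOracle _ _).le
    calc _ ≤ nrm ((phaseOracle X).mulVec (A.state X t) - (phaseOracle Y).mulVec (A.state Y t)) :=
          nrm_le_of_nsq_le (nsq_unitary (A.U_unitary _) _).le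
      _ = nrm (((phaseOracle X).mulVec (A.state X t) - (phaseOracle Y).mulVec (A.state X t))
            + (phaseOracle Y).mulVec (A.state X t - A.state Y t)) := by
          rw [Matrix.mulVec_sub]; congr 1; abel
      _ ≤ _ := nrm_add_le _ _
      _ ≤ _ := by linarith

lemma abs_acc_sub_le (A : BAlg N W) (T : ℕ) (X Y : Fin N → Bool) :
    |A.acc T X - A.acc T Y| ≤ 2 * nrm (A.state X T - A.state Y T) := by
  have hle (Z : Fin N → Bool) : nrm (A.proj.mulVec (A.state Z T)) ≤ 1 := by
    refine (sq_le_one_iff₀ (nrm_nonneg _)).mp ?_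
    rw [nrm_sq]
    exact (acc_mem A T Z).2
  have hd := (abs_nrm_sub_le (A.proj.mulVec (A.state X T)) (A.proj.mulVec (A.state Y T)))
  rw [← Matrix.mulVec_sub] at hd
  have hp := nrm_le_of_nsq_le
    (nsq_proj_le A.proj_herm A.proj_idem (A.state X T - A.state Y T))
  rw [acc_eq, acc_eq, ← nrm_sq, ← nrm_sq, sq_sub_sq, abs_mul]
  refine mul_le_mul ?_ (hd.trans hp) (abs_nonneg _) (by norm_num)
  rw [abs_of_nonneg (add_nonneg (nrm_nonneg _) (nrm_nonneg _))]
  linarith [hle X, hle Y]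

/-- The hybrid bound holds for every input `X`, not only on average: the squared sensitivities
at `X` sum to at most `16 T²`. -/
lemma sum_sq_acc_sub_le (A : BAlg N W) (T : ℕ) (X : Fin N → Bool) :
    ∑ i, (A.acc T X - A.acc T (Function.update X i (!X i))) ^ 2 ≤ 16 * (T : ℝ) ^ 2 := by
  have key (i : Fin N) : (A.acc T X - A.acc T (Function.update X i (!X i))) ^ 2
      ≤ 16 * T * ∑ s ∈ Finset.range T, qmass (A.state X s) i := by
    have h := (abs_acc_sub_le A T X (Function.update X i (!X i))).trans
      (mul_le_mul_of_nonneg_left (nrm_state_sub_le A X i T) (by norm_num))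
    rw [← Finset.mul_sum] at h
    have hc := sq_sum_le_card_mul_sum_sq (s := Finset.range T)
      (f := fun s => √(qmass (A.state X s) i))
    simp only [Real.sq_sqrt (qmass_nonneg _ _), Finset.card_range] at hc
    have h2 := pow_le_pow_left₀ (abs_nonneg _) h 2
    rw [sq_abs] at h2
    nlinarith
  calc _ ≤ ∑ i, 16 * (T : ℝ) * ∑ s ∈ Finset.range T, qmass (A.state X s) i :=
        Finset.sum_le_sum fun i _ => key i
    _ = 16 * T * ∑ s ∈ Finset.range T, ∑ i, qmass (A.state X s) i := by
        rw [← Finset.mul_sum, Finset.sum_comm]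
    _ = 16 * (T : ℝ) ^ 2 := by
        simp only [sum_qmass, nsq_state, Finset.sum_const, Finset.card_range, nsmul_eq_mul]
        ring

end Hybrid

/-! ### The squared-influence potential -/

section Potential

variable {N : ℕ}

/-- The squared influence `∑ X, (f X - f (X^i))²`, without the normalisation by `2 ^ N`. -/
noncomputable def sqInf (f : (Fin N → Bool) → ℝ) (i : Fin N) : ℝ :=
  ∑ X : Fin N → Bool, (f X - f (Function.update X i (!X i))) ^ 2

/-- The total squared influence of `f`, again without normalisation. -/
noncomputable def totInf (f : (Fin N → Bool) → ℝ) : ℝ := ∑ i, sqInf f i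

lemma sqInf_nonneg (f : (Fin N → Bool) → ℝ) (i : Fin N) : 0 ≤ sqInf f i :=
  Finset.sum_nonneg fun _ _ => sq_nonneg _

lemma totInf_nonneg (f : (Fin N → Bool) → ℝ) : 0 ≤ totInf f :=
  Finset.sum_nonneg fun _ _ => sqInf_nonneg _ _

lemma totInf_acc_le {W : ℕ} (A : BAlg N W) (T : ℕ) :
    totInf (A.acc T) ≤ 16 * (T : ℝ) ^ 2 * 2 ^ N := by
  unfold totInf sqInf
  rw [Finset.sum_comm]
  calc _ ≤ ∑ _X : Fin N → Bool, 16 * (T : ℝ) ^ 2 :=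
        Finset.sum_le_sum fun X _ => sum_sq_acc_sub_le A T X
    _ = _ := by simp [mul_comm]

/-- Summing over both values of the `i`-th bit counts every point of the cube twice. -/
lemma sum_update_add (g : (Fin N → Bool) → ℝ) (i : Fin N) :
    ∑ X : Fin N → Bool, g (Function.update X i false)
      + ∑ X : Fin N → Bool, g (Function.update X i true) = 2 * ∑ X, g X := by
  have hinv : Function.Involutive (fun X : Fin N → Bool => Function.update X i (!X i)) := by
    intro X; simp
  have hflip : ∑ X : Fin N → Bool, g (Function.update X i (!X i)) = ∑ X, g X :=
    hinv.bijective.sum_comp g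
  rw [two_mul]
  nth_rewrite 2 [← hflip]
  rw [← Finset.sum_add_distrib, ← Finset.sum_add_distrib]
  refine Finset.sum_congr rfl fun X _ => ?_
  have hX : g X = g (Function.update X i (X i)) := by simp
  rw [hX]
  cases X i <;> simp [add_comm]

/-- Restricting `x_i` removes exactly the influence of `i`, on average over the two values. -/
lemma totInf_restrict (f : (Fin N → Bool) → ℝ) (i : Fin N) :
    totInf (fun X => f (Function.update X i false))
      + totInf (fun X => f (Function.update X i true)) = 2 * (totInf f - sqInf f i) := by
  classical
  have h0 (b : Bool) : sqInf (fun X => f (Function.update X i b)) i = 0 := by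
    simp [sqInf]
  have hj (j : Fin N) (hji : j ≠ i) : sqInf (fun X => f (Function.update X i false)) j
      + sqInf (fun X => f (Function.update X i true)) j = 2 * sqInf f j := by
    have hb (b : Bool) : sqInf (fun X => f (Function.update X i b)) j
        = ∑ X : Fin N → Bool, (fun Z => (f Z - f (Function.update Z j (!Z j))) ^ 2)
            (Function.update X i b) := by
      refine Finset.sum_congr rfl fun X _ => ?_
      simp only [Function.update_of_ne hji, Function.update_comm hji]
    rw [hb, hb]
    exact sum_update_add (fun Z => (f Z - f (Function.update Z j (!Z j))) ^ 2) i
  unfold totInf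
  rw [← Finset.add_sum_erase _ _ (Finset.mem_univ i), ← Finset.add_sum_erase _
    (fun j => sqInf (fun X => f (Function.update X i true)) j) (Finset.mem_univ i),
    ← Finset.add_sum_erase _ (fun j => sqInf f j) (Finset.mem_univ i), h0, h0]
  have := Finset.sum_congr rfl fun j (hm : j ∈ Finset.univ.erase i) =>
    hj j (Finset.ne_of_mem_erase hm)
  rw [Finset.sum_add_distrib, ← Finset.mul_sum] at this
  linarith

/-- By Cauchy–Schwarz, an `L₁`-influence of at least `τ` forces a squared influence of at
least `τ²`. -/
lemma le_sqInf_of_le_bInf {f : (Fin N → Bool) → ℝ} {i : Fin N} {τ : ℝ} (hτ : 0 ≤ τ)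
    (h : τ ≤ bInf i f) : τ ^ 2 * 2 ^ N ≤ sqInf f i := by
  have h2 : (0 : ℝ) < 2 ^ N := by positivity
  unfold bInf at h
  rw [le_div_iff₀ h2] at h
  have hc := sq_sum_le_card_mul_sum_sq (s := (Finset.univ : Finset (Fin N → Bool)))
    (f := fun X => |f X - f (Function.update X i (!X i))|)
  simp only [sq_abs, Finset.card_univ, Fintype.card_fun, Fintype.card_bool, Fintype.card_fin,
    Nat.cast_pow, Nat.cast_ofNat] at hc
  have h3 := (pow_le_pow_left₀ (by positivity) h 2).trans hc
  refine le_of_mul_le_mul_left ?_ h2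
  calc _ = (τ * 2 ^ N) ^ 2 := by ring
    _ ≤ _ := h3

/-! ### The greedy decision tree -/

/-- The number of inputs on which `t` misses `f` by more than `ε`. -/
noncomputable def badCount (t : RTree N) (f : (Fin N → Bool) → ℝ) (ε : ℝ) : ℝ :=
  ∑ X : Fin N → Bool, if ε < |t.eval X - f X| then 1 else 0

lemma badCount_le (t : RTree N) (f : (Fin N → Bool) → ℝ) (ε : ℝ) : badCount t f ε ≤ 2 ^ N := by
  classical
  calc badCount t f ε ≤ ∑ _X : Fin N → Bool, (1 : ℝ) :=
        Finset.sum_le_sum fun X _ => by split_ifs <;> norm_num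
    _ = 2 ^ N := by simp

lemma card_good (t : RTree N) (f : (Fin N → Bool) → ℝ) (ε : ℝ) :
    (Nat.card {X : Fin N → Bool // |t.eval X - f X| ≤ ε} : ℝ) = 2 ^ N - badCount t f ε := by
  classical
  have h : (∑ X : Fin N → Bool, if |t.eval X - f X| ≤ ε then (1 : ℝ) else 0) + badCount t f ε
      = 2 ^ N := by
    rw [badCount, ← Finset.sum_add_distrib]
    calc _ = ∑ _X : Fin N → Bool, (1 : ℝ) := Finset.sum_congr rfl fun X _ => by
            by_cases hX : |t.eval X - f X| ≤ ε
            · simp [hX, not_lt.mpr hX]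
            · simp [hX, not_le.mp hX]
      _ = 2 ^ N := by simp
  rw [Nat.card_eq_fintype_card, Fintype.card_subtype, ← h]
  simp

/-- If the variance is small, the constant answer `E f` is rarely off by more than `ε`. -/
lemma badCount_mean_le (f : (Fin N → Bool) → ℝ) {ε η : ℝ} (hε : 0 < ε) (h : bVr f ≤ η) :
    badCount (.leaf ((∑ Y, f Y) / 2 ^ N)) f ε ≤ η / ε * 2 ^ N := by
  classical
  have h2 : (0 : ℝ) < 2 ^ N := by positivity
  set μ := (∑ Y, f Y) / 2 ^ N with hμ
  have hdev (X : Fin N → Bool) : |μ - f X| ≤ (∑ Y, |f X - f Y|) / 2 ^ N := by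
    have : μ - f X = (∑ Y, (f Y - f X)) / 2 ^ N := by
      rw [hμ, Finset.sum_sub_distrib]
      field_simp
      simp
    rw [this, abs_div, abs_of_pos h2]
    gcongr
    refine (Finset.abs_sum_le_sum_abs _ _).trans (Finset.sum_le_sum fun Y _ => ?_)
    rw [abs_sub_comm]
  have hM : ε * badCount (.leaf μ) f ε ≤ ∑ X, |μ - f X| := by
    rw [badCount, Finset.mul_sum]
    refine Finset.sum_le_sum fun X _ => ?_
    have hμX : |(RTree.leaf μ : RTree N).eval X - f X| = |μ - f X| := by simp only [RTree.eval]
    by_cases hX : ε < |(RTree.leaf μ : RTree N).eval X - f X|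
    · rw [if_pos hX]
      linarith
    · rw [if_neg hX, mul_zero]
      exact abs_nonneg _
  have hV : ∑ X, |μ - f X| ≤ η * 2 ^ N := by
    calc _ ≤ ∑ X, (∑ Y, |f X - f Y|) / 2 ^ N := Finset.sum_le_sum fun X _ => hdev X
      _ = bVr f * 2 ^ N := by
          rw [← Finset.sum_div, bVr]
          field_simp
      _ ≤ _ := by gcongr
  have : badCount (.leaf μ) f ε ≤ η * 2 ^ N / ε := by
    rw [le_div_iff₀ hε]; linarith
  calc _ ≤ _ := this
    _ = _ := by ring

/-- The error count of a node is the average of those of its subtrees. This needs the subtrees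
not to query `i` again in an essential way. -/
lemma badCount_node (i : Fin N) (t0 t1 : RTree N) (f : (Fin N → Bool) → ℝ) (ε : ℝ)
    (h0 : ∀ X b, t0.eval (Function.update X i b) = t0.eval X)
    (h1 : ∀ X b, t1.eval (Function.update X i b) = t1.eval X) :
    badCount t0 (fun X => f (Function.update X i false)) ε
      + badCount t1 (fun X => f (Function.update X i true)) ε
      = 2 * badCount (.node i t0 t1) f ε := by
  classical
  unfold badCount
  rw [← sum_update_add _ i]
  simp only [RTree.eval, Function.update_self, h0, h1]
  simp

/-- The potential argument. The hypothesis `hinf` is what the conjecture gives at degree `d`: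
variance above `η` forces an influence of at least `τ`. The last conclusion, that the tree ignores
every variable that `f` ignores, is what makes error counts average at a node. -/
lemma exists_tree {d : ℕ} {τ η ε : ℝ} (hτ : 0 < τ) (hη : 0 < η) (hε : 0 < ε)
    (hinf : ∀ f : (Fin N → Bool) → ℝ, IsDeg d f → (∀ X, 0 ≤ f X ∧ f X ≤ 1) → η < bVr f →
      ∃ i, τ ≤ bInf i f) (k : ℕ) (f : (Fin N → Bool) → ℝ) (hd : IsDeg d f)
    (hf : ∀ X, 0 ≤ f X ∧ f X ≤ 1) :
    ∃ t : RTree N, t.depth ≤ k ∧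
      k * τ ^ 2 * (badCount t f ε - η / ε * 2 ^ N) ≤ totInf f ∧
      ∀ j, (∀ X b, f (Function.update X j b) = f X) →
        ∀ X b, t.eval (Function.update X j b) = t.eval X := by
  induction k generalizing f with
  | zero => exact ⟨.leaf 0, by simp [RTree.depth], by simpa using totInf_nonneg f,
      fun _ _ _ _ => rfl⟩
  | succ k ih =>
    by_cases hV : bVr f ≤ η
    · refine ⟨.leaf ((∑ Y, f Y) / 2 ^ N), by simp [RTree.depth], ?_, fun _ _ _ _ => rfl⟩
      refine le_trans ?_ (totInf_nonneg f)
      exact mul_nonpos_of_nonneg_of_nonpos (by positivity)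
        (sub_nonpos.mpr (badCount_mean_le f hε hV))
    · obtain ⟨i, hi⟩ := hinf f hd hf (not_le.mp hV)
      obtain ⟨t0, hd0, hb0, hj0⟩ := ih _ (hd.update i false) fun X => hf _
      obtain ⟨t1, hd1, hb1, hj1⟩ := ih _ (hd.update i true) fun X => hf _
      have hI := le_sqInf_of_le_bInf hτ.le hi
      refine ⟨.node i t0 t1, by simp [RTree.depth, hd0, hd1], ?_, ?_⟩
      · have hn := badCount_node i t0 t1 f ε
          (hj0 i fun X b => by simp) (hj1 i fun X b => by simp)
        have hr := totInf_restrict f i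
        -- The extra factor `τ²` is charged to the influence of `i`, as `β - η/ε ≤ 1`.
        have hB : τ ^ 2 * (badCount (.node i t0 t1) f ε - η / ε * 2 ^ N) ≤ τ ^ 2 * 2 ^ N := by
          have : 0 ≤ η / ε * 2 ^ N := by positivity
          have := badCount_le (.node i t0 t1) f ε
          gcongr
          linarith
        push_cast
        linear_combination (hb0 + hb1) / 2 + hB + hI + hr / 2 - (k : ℝ) * τ ^ 2 * hn / 2
      · intro j hj
        -- `f` depends on `i`, since its influence is positive.
        have hji : j ≠ i := by
          rintro rfl
          have : bInf j f = 0 := by simp [bInf, hj]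
          linarith
        have hc (b' : Bool) : ∀ X b, f (Function.update (Function.update X j b) i b')
            = f (Function.update X i b') := fun X b => by
          rw [Function.update_comm hji, hj]
        intro X b
        simp only [RTree.eval, Function.update_of_ne hji.symm, hj0 j (hc false), hj1 j (hc true)]

end Potential

/-! ### Choice of parameters -/

/-- The number of queries is polynomial in `R = 2 + T/(εδ)`. At `T = 0` it is `1`, although
`1/(εδ)` is not bounded in terms of `R` then. -/
lemma depth_bound {κ ε δ : ℝ} (hκ : 1 ≤ κ) (T : ℕ) (hε : 0 < ε) (hε1 : ε < 1) (hδ : 0 < δ)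
    (hδ1 : δ < 1) :
    32 * (T : ℝ) ^ 2 / (((ε * δ / 2 / ((2 * T + 1 : ℕ) : ℝ)) ^ κ) ^ 2 * δ) + 1
      ≤ (2 + T / (ε * δ)) ^ (8 * κ + 8) := by
  have hx : 0 < ε * δ := by positivity
  set R := 2 + (T : ℝ) / (ε * δ) with hR
  have hq : 0 ≤ (T : ℝ) / (ε * δ) := by positivity
  have hR2 : 2 ≤ R := by linarith
  have hR0 : 0 < R := by linarith
  rcases Nat.eq_zero_or_pos T with hT | hT
  · have : (1 : ℝ) ≤ R ^ (8 * κ + 8) := Real.one_le_rpow (by linarith) (by linarith)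
    simpa [hT] using this
  · have hT1 : (1 : ℝ) ≤ T := by exact_mod_cast hT
    set a := ε * δ / 2 / ((2 * T + 1 : ℕ) : ℝ) with ha
    have ha0 : 0 < a := by positivity
    -- `1/a = 2 (2T + 1)/(εδ) ≤ 6 R ≤ R⁴`.
    have hinv : a⁻¹ ≤ R ^ (4 : ℕ) := by
      have h1 : a⁻¹ = (2 * (2 * T + 1)) / (ε * δ) := by
        rw [ha]; push_cast; field_simp
      have h2 : a⁻¹ ≤ 6 * (T / (ε * δ)) := by
        rw [h1, ← mul_div_assoc]
        exact div_le_div_of_nonneg_right (by linarith) hx.le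
      have h3 : (8 : ℝ) ≤ R ^ 3 := by
        calc (8 : ℝ) = 2 ^ 3 := by norm_num
          _ ≤ _ := by gcongr
      nlinarith
    have hτ : ((a ^ κ) ^ 2)⁻¹ ≤ R ^ (8 * κ) := by
      calc ((a ^ κ) ^ 2)⁻¹ = ((a⁻¹) ^ κ) ^ 2 := by
            rw [Real.inv_rpow ha0.le, inv_pow]
        _ ≤ ((R ^ (4 : ℕ)) ^ κ) ^ 2 := by gcongr
        _ = R ^ (8 * κ) := by
            rw [← Real.rpow_natCast R 4, ← Real.rpow_mul hR0.le, ← Real.rpow_natCast,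
              ← Real.rpow_mul hR0.le]
            congr 1
            push_cast
            ring
    have hTd : 32 * (T : ℝ) ^ 2 / δ ≤ R ^ (7 : ℕ) := by
      have h1 : (T : ℝ) ^ 2 / δ ≤ (T / (ε * δ)) ^ 2 := by
        rw [div_pow]
        gcongr
        nlinarith [mul_lt_one_of_nonneg_of_lt_one_left hε.le hε1 hδ1.le, mul_pos hε hδ]
      have h2 : (T / (ε * δ)) ^ 2 ≤ R ^ 2 := by
        gcongr
        linarith
      have h3 : (32 : ℝ) ≤ R ^ 5 := by
        calc (32 : ℝ) = 2 ^ 5 := by norm_num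
          _ ≤ _ := by gcongr
      calc 32 * (T : ℝ) ^ 2 / δ = 32 * ((T : ℝ) ^ 2 / δ) := by ring
        _ ≤ R ^ 5 * R ^ 2 := by gcongr; exact h1.trans h2
        _ = R ^ 7 := by ring
    have hS : 1 ≤ R ^ (8 * κ + 7) := Real.one_le_rpow (by linarith) (by linarith)
    calc 32 * (T : ℝ) ^ 2 / ((a ^ κ) ^ 2 * δ) + 1
        = ((a ^ κ) ^ 2)⁻¹ * (32 * (T : ℝ) ^ 2 / δ) + 1 := by
          congr 1
          field_simp
      _ ≤ R ^ (8 * κ) * R ^ (7 : ℕ) + 1 := by gcongr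
      _ = R ^ (8 * κ + 7) + 1 := by
          rw [← Real.rpow_natCast R 7, ← Real.rpow_add hR0]
          norm_num
      _ ≤ R ^ (8 * κ + 7) * R := by nlinarith
      _ = R ^ (8 * κ + 8) := by
          rw [← Real.rpow_add_one hR0.ne']
          congr 1
          ring

/-- assuming the "bounded low-degree polynomials have influential variables"
conjecture (with exponent `κ`), every `T`-query quantum algorithm can be `ε`-approximated on a
`1−δ` fraction of inputs by a deterministic decision tree of depth `(2 + T/(εδ))^C`. -/
theorem quantum_simulation_from_influence_conjecture (κ : ℝ) (hκ : 1 ≤ κ)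
    (hconj : ∀ (N d : ℕ) (p : MvPolynomial (Fin N) ℝ), 1 ≤ d → p.totalDegree ≤ d →
      (∀ X : Fin N → Bool, 0 ≤ evalB p X ∧ evalB p X ≤ 1) →
      0 < bVr (evalB p) →
      ∃ i : Fin N, (bVr (evalB p) / d) ^ κ ≤ bInf i (evalB p)) :
    ∃ C : ℝ, 0 < C ∧
      ∀ (N W T : ℕ) (A : BAlg N W) (ε δ : ℝ), 0 < ε → ε < 1 → 0 < δ → δ < 1 →
        ∃ t : RTree N,
          (t.depth : ℝ) ≤ (2 + T / (ε * δ)) ^ C ∧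
          (1 - δ) * 2 ^ N ≤
            (Nat.card {X : Fin N → Bool // |t.eval X - A.acc T X| ≤ ε} : ℝ) := by
  refine ⟨8 * κ + 8, by linarith, fun N W T A ε δ hε hε1 hδ hδ1 => ?_⟩
  have hη : 0 < ε * δ / 2 := by positivity
  -- The degree bound `2T + 1` rather than `2T` meets the requirement `1 ≤ d` also at `T = 0`.
  set d : ℕ := 2 * T + 1 with hd
  have hd0 : (0 : ℝ) < d := by rw [hd]; positivity
  set τ : ℝ := (ε * δ / 2 / d) ^ κ with hτdef
  have hτ : 0 < τ := by positivity
  have hinf : ∀ f : (Fin N → Bool) → ℝ, IsDeg d f → (∀ X, 0 ≤ f X ∧ f X ≤ 1) →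
      ε * δ / 2 < bVr f → ∃ i, τ ≤ bInf i f := by
    rintro f ⟨p, hp, rfl⟩ hf hV
    obtain ⟨i, hi⟩ := hconj N d p (by omega) hp hf (hη.trans hV)
    refine ⟨i, le_trans ?_ hi⟩
    rw [hτdef]
    gcongr
  set k : ℕ := ⌊32 * (T : ℝ) ^ 2 / (τ ^ 2 * δ)⌋₊ + 1 with hk
  obtain ⟨t, ht, hb, -⟩ := exists_tree hτ hη hε hinf k (A.acc T)
    ((acc_isDeg A T).mono (by omega)) (acc_mem A T)
  refine ⟨t, ?_, ?_⟩
  · calc (t.depth : ℝ) ≤ k := by exact_mod_cast ht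
      _ ≤ 32 * (T : ℝ) ^ 2 / (τ ^ 2 * δ) + 1 := by
          rw [hk]; push_cast
          gcongr
          exact Nat.floor_le (by positivity)
      _ ≤ _ := depth_bound hκ T hε hε1 hδ hδ1
  · have hk32 : 32 * (T : ℝ) ^ 2 ≤ k * (τ ^ 2 * δ) := by
      rw [← div_le_iff₀ (by positivity), hk]
      push_cast
      exact (Nat.lt_floor_add_one _).le
    have hk0 : (0 : ℝ) < k := by rw [hk]; positivity
    have h2 : (0 : ℝ) < 2 ^ N := by positivity
    have he : ε * δ / 2 / ε = δ / 2 := by field_simp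
    rw [he] at hb
    have hJ := hb.trans (totInf_acc_le A T)
    have : badCount t (A.acc T) ε - δ / 2 * 2 ^ N ≤ δ / 2 * 2 ^ N := by
      refine le_of_mul_le_mul_left (hJ.trans ?_) (by positivity : 0 < k * τ ^ 2)
      calc 16 * (T : ℝ) ^ 2 * 2 ^ N = 32 * (T : ℝ) ^ 2 * (2 ^ N / 2) := by ring
        _ ≤ k * (τ ^ 2 * δ) * (2 ^ N / 2) := by gcongr
        _ = _ := by ring
    rw [card_good]
    linarith
end

section
/- There is a universal constant C such that the following holds. Let Q be a T-query quantum algorithm on Boolean inputs X ∈ {0,1}^N with acceptance probability p(X), and let α, δ ∈ (0,1). Then there exist a set S ⊆ [N] of size at most 2^{C·T}/(α⁴δ⁴) and a function p̃ : {0,1}^N → ℝ depending only on the coordinates in S, such that |p̃(X) − p(X)| ≤ α for at least a (1−δ) fraction of the inputs X ∈ {0,1}^N. -/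
/-!
The acceptance probability `p` is a function on the cube of degree at most `d = 2T` (the polynomial
method, `acc_mem`) with values in `[0,1]` (`acc_bound`), and only these two facts are used. The
result is therefore a junta theorem for bounded functions `f` of low degree, and it rests on a
bound for the sum of the `L¹` influences `a_i = 𝔼 |f(X^i) - f(X)|`, where `X^i` is `X` with
coordinate `i` negated.

* Fix `X` and move the coordinates of a set `B` simultaneously from `X` to its negation. The
  multilinear extension of `f` becomes a univariate polynomial `q` on `[0,1]` of degree at most `d`,
  bounded by `1`, with `q'(0) = ∑_{i ∈ B} (f(X^i) - f(X))` (`path_poly`). Markov's inequality at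
  the endpoint gives `q'(0) ≤ 2d²`; taking for `B` the coordinates where the difference has a given
  sign yields `∑_i |f(X^i) - f(X)| ≤ 4d²` at every `X` (`sensitivity`), so `∑_i a_i ≤ 4d²`.
* The Bonami lemma implies `𝔼 g² ≤ 9^d (𝔼 |g|)²` in degree at most `d` (`l2_le_l1`), so the
  `L²` influences satisfy `Inf_i ≤ 9^d a_i²`.
* Let `S` be the set of coordinates with `a_i ≥ τ`, and average `f` over the others. Then
  `|S| ≤ 4d²/τ`, and by the Efron–Stein inequality the squared `L²` error is at most
  `∑_{i ∉ S} 9^d a_i² ≤ 9^d τ · 4d²` (`junta`). With `τ = α² δ 2^{-O(d)}`, Chebyshev's inequality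
  finishes the proof, with `|S| ≤ 2^{O(T)}/(α² δ)`.
-/

open scoped BigOperators

namespace QJunta
open Finset

/-! ### Low-degree functions on the cube -/

/-- The sign `(-1)^b`. -/
def sg (b : Bool) : ℝ := if b then -1 else 1

/-- Negate the coordinates in `A`. -/
def flip {N : ℕ} (A : Finset (Fin N)) (X : Fin N → Bool) : Fin N → Bool :=
  fun i => xor (decide (i ∈ A)) (X i)

/-- The Walsh character `χ_S`. -/
def chi {N : ℕ} (S : Finset (Fin N)) (X : Fin N → Bool) : ℝ := ∏ i ∈ S, sg (X i)

/-- Functions on the cube of degree at most `d` depending only on coordinates in `s`, as the span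
of the characters `χ_S` with `S ⊆ s` and `|S| ≤ d`. -/
def V {N : ℕ} (s : Finset (Fin N)) (d : ℕ) : Submodule ℝ ((Fin N → Bool) → ℝ) :=
  Submodule.span ℝ {f | ∃ S : Finset (Fin N), S ⊆ s ∧ #S ≤ d ∧ f = chi S}

variable {N : ℕ}

lemma sg_mul_self (b : Bool) : sg b * sg b = 1 := by cases b <;> simp [sg]

lemma flip_flip (A B : Finset (Fin N)) (X : Fin N → Bool) :
    flip A (flip B X) = flip (symmDiff A B) X := by
  funext i
  by_cases hA : i ∈ A <;> by_cases hB : i ∈ B <;> simp [flip, hA, hB, mem_symmDiff]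

lemma flip_invol (A : Finset (Fin N)) : Function.Involutive (flip A) := by
  intro X
  rw [flip_flip, symmDiff_self]
  funext i
  simp [flip]

lemma flip_comm (A B : Finset (Fin N)) (X : Fin N → Bool) :
    flip A (flip B X) = flip B (flip A X) := by
  rw [flip_flip, flip_flip, symmDiff_comm]

lemma expect_flip (A : Finset (Fin N)) (f : (Fin N → Bool) → ℝ) :
    (𝔼 X, f (flip A X)) = 𝔼 X, f X :=
  Fintype.expect_equiv (flip_invol A).toPerm _ _ fun _ => rfl

lemma chi_flip (S A : Finset (Fin N)) (X : Fin N → Bool) :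
    chi S (flip A X) = (∏ i ∈ S, if i ∈ A then (-1 : ℝ) else 1) * chi S X := by
  unfold chi
  rw [← prod_mul_distrib]
  refine prod_congr rfl fun i _ => ?_
  by_cases h : i ∈ A <;> cases h2 : X i <;> simp [flip, sg, h, h2]

lemma chi_mem {s S : Finset (Fin N)} {d : ℕ} (h : S ⊆ s) (hd : #S ≤ d) : chi S ∈ V s d :=
  Submodule.subset_span ⟨S, h, hd, rfl⟩

lemma V_mono {s : Finset (Fin N)} {d e : ℕ} (h : d ≤ e) : V s d ≤ V s e := by
  apply Submodule.span_mono
  rintro _ ⟨S, h1, h2, rfl⟩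
  exact ⟨S, h1, h2.trans h, rfl⟩

lemma chi_mul (S T : Finset (Fin N)) : chi S * chi T = chi (symmDiff S T) := by
  funext X
  have h : ∀ S : Finset (Fin N), chi S X = ∏ i, if i ∈ S then sg (X i) else 1 := fun S => by
    simp [chi, prod_ite_mem]
  rw [Pi.mul_apply, h, h, h, ← prod_mul_distrib]
  refine prod_congr rfl fun i _ => ?_
  by_cases hA : i ∈ S <;> by_cases hB : i ∈ T <;> simp [hA, hB, mem_symmDiff, sg_mul_self]

lemma V_mul {d e : ℕ} {f g : (Fin N → Bool) → ℝ} (hf : f ∈ V univ d) (hg : g ∈ V univ e) :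
    f * g ∈ V univ (d + e) := by
  have h : V (univ : Finset (Fin N)) d * V univ e ≤ V univ (d + e) := by
    unfold V
    rw [Submodule.span_mul_span]
    apply Submodule.span_mono
    rintro _ ⟨_, ⟨S, -, hS, rfl⟩, _, ⟨T, -, hT, rfl⟩, rfl⟩
    refine ⟨symmDiff S T, subset_univ _, ?_, chi_mul S T⟩
    exact (card_le_card symmDiff_le_sup).trans ((card_union_le _ _).trans (by omega))
  exact h (Submodule.mul_mem_mul hf hg)

lemma V_flip {s : Finset (Fin N)} {d : ℕ} {f : (Fin N → Bool) → ℝ} (hf : f ∈ V s d)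
    (A : Finset (Fin N)) : (fun X => f (flip A X)) ∈ V s d := by
  induction hf using Submodule.span_induction with
  | mem x h =>
    obtain ⟨S, h1, h2, rfl⟩ := h
    have : (fun X => chi S (flip A X))
        = (∏ i ∈ S, if i ∈ A then (-1 : ℝ) else 1) • chi S := by
      funext X
      simp [chi_flip]
    rw [this]
    exact Submodule.smul_mem _ _ (chi_mem h1 h2)
  | zero => exact Submodule.zero_mem _
  | add x y _ _ hx hy => exact Submodule.add_mem _ hx hy
  | smul a x _ hx => exact Submodule.smul_mem _ a hx

/-- Elements of `V s d` do not depend on coordinates outside `s`. -/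
lemma V_flip_eq {s : Finset (Fin N)} {d : ℕ} {f : (Fin N → Bool) → ℝ} (hf : f ∈ V s d)
    {i : Fin N} (hi : i ∉ s) (X : Fin N → Bool) : f (flip {i} X) = f X := by
  induction hf using Submodule.span_induction with
  | mem x h =>
    obtain ⟨S, h1, h2, rfl⟩ := h
    rw [chi_flip, prod_eq_one, one_mul]
    intro j hj
    have : j ≠ i := fun h => hi (h1 (h ▸ hj))
    simp [this]
  | zero => rfl
  | add x y _ _ hx hy => simp [hx, hy]
  | smul a x _ hx => simp [hx]

/-- Splitting off one coordinate: `f = g + x_i h`, where `h` has degree at most `d - 1`. The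
clause `d = 0 → h = 0` compensates for the truncated subtraction. -/
lemma V_split {s : Finset (Fin N)} {d : ℕ} {f : (Fin N → Bool) → ℝ} {i : Fin N} (_hi : i ∉ s)
    (hf : f ∈ V (insert i s) d) :
    ∃ g ∈ V s d, ∃ h ∈ V s (d - 1), (d = 0 → h = 0) ∧ ∀ X, f X = g X + sg (X i) * h X := by
  induction hf using Submodule.span_induction with
  | mem x h =>
    obtain ⟨S, h1, h2, rfl⟩ := h
    by_cases hS : i ∈ S
    · have hc := card_erase_add_one hS
      refine ⟨0, Submodule.zero_mem _, chi (S.erase i), chi_mem ?_ (by omega), by omega, ?_⟩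
      · intro j hj
        rw [mem_erase] at hj
        exact (mem_insert.1 (h1 hj.2)).resolve_left hj.1
      · intro X
        simp [chi, mul_prod_erase _ (fun i => sg (X i)) hS]
    · refine ⟨chi S, chi_mem ?_ h2, 0, Submodule.zero_mem _, fun _ => rfl, by simp⟩
      intro j hj
      exact (mem_insert.1 (h1 hj)).resolve_left fun h => hS (h ▸ hj)
  | zero => exact ⟨0, Submodule.zero_mem _, 0, Submodule.zero_mem _, fun _ => rfl, by simp⟩
  | add x y _ _ hx hy =>
    obtain ⟨g, hg, h, hh, h0, e⟩ := hx
    obtain ⟨g', hg', h', hh', h0', e'⟩ := hy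
    refine ⟨g + g', Submodule.add_mem _ hg hg', h + h', Submodule.add_mem _ hh hh',
      fun hd => by rw [h0 hd, h0' hd, add_zero], fun X => ?_⟩
    simp only [Pi.add_apply, e, e']
    ring
  | smul a x _ hx =>
    obtain ⟨g, hg, h, hh, h0, e⟩ := hx
    refine ⟨a • g, Submodule.smul_mem _ _ hg, a • h, Submodule.smul_mem _ _ hh,
      fun hd => by rw [h0 hd, smul_zero], fun X => ?_⟩
    simp only [Pi.smul_apply, smul_eq_mul, e]
    ring

/-! ### Hypercontractivity -/

/-- An odd function of coordinate `i` has mean zero; this kills the cross terms in the Bonami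
induction. -/
lemma expect_odd {i : Fin N} {f : (Fin N → Bool) → ℝ} (hf : ∀ X, f (flip {i} X) = f X) :
    (𝔼 X, sg (X i) * f X) = 0 := by
  have h := expect_flip {i} (fun X => sg (X i) * f X)
  have h2 : ∀ X : Fin N → Bool, sg (flip {i} X i) = - sg (X i) := fun X => by
    cases h : X i <;> simp [flip, sg, h]
  simp only [hf, h2, neg_mul, expect_neg_distrib] at h
  linarith

/-- The Bonami lemma: fourth moments of low-degree functions are controlled by second moments. -/
lemma bonami (s : Finset (Fin N)) : ∀ (d : ℕ) (f : (Fin N → Bool) → ℝ), f ∈ V s d →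
    (𝔼 X, f X ^ 4) ≤ 9 ^ d * (𝔼 X, f X ^ 2) ^ 2 := by
  induction s using Finset.induction_on with
  | empty =>
    intro d f hf
    have hc : ∃ c : ℝ, ∀ X, f X = c := by
      induction hf using Submodule.span_induction with
      | mem x h =>
        obtain ⟨S, h1, h2, rfl⟩ := h
        exact ⟨1, fun X => by simp [chi, subset_empty.1 h1]⟩
      | zero => exact ⟨0, fun _ => rfl⟩
      | add x y _ _ hx hy =>
        obtain ⟨a, ha⟩ := hx
        obtain ⟨b, hb⟩ := hy
        exact ⟨a + b, fun X => by simp [ha, hb]⟩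
      | smul a x _ hx =>
        obtain ⟨b, hb⟩ := hx
        exact ⟨a * b, fun X => by simp [hb]⟩
    obtain ⟨c, hc⟩ := hc
    simp only [hc, Fintype.expect_const]
    have : (1 : ℝ) ≤ 9 ^ d := one_le_pow₀ (by norm_num)
    nlinarith [sq_nonneg (c ^ 2)]
  | insert i s hi ih =>
    intro d f hf
    obtain ⟨g, hg, h, hh, h0, e⟩ := V_split hi hf
    have hgi := V_flip_eq hg hi
    have hhi := V_flip_eq hh hi
    have e2 : (𝔼 X, f X ^ 2) = (𝔼 X, g X ^ 2) + 𝔼 X, h X ^ 2 := by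
      have : ∀ X, f X ^ 2 = g X ^ 2 + h X ^ 2 + sg (X i) * (2 * g X * h X) := fun X => by
        rw [e]; linear_combination (h X ^ 2) * sg_mul_self (X i)
      simp only [this, expect_add_distrib]
      rw [expect_odd (fun X => by rw [hgi, hhi]), add_zero]
    have e4 : (𝔼 X, f X ^ 4)
        = (𝔼 X, g X ^ 4) + 6 * (𝔼 X, g X ^ 2 * h X ^ 2) + 𝔼 X, h X ^ 4 := by
      have : ∀ X, f X ^ 4 = g X ^ 4 + 6 * (g X ^ 2 * h X ^ 2) + h X ^ 4
          + sg (X i) * (4 * g X ^ 3 * h X + 4 * g X * h X ^ 3) := fun X => by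
        rw [e]
        linear_combination (6 * g X ^ 2 * h X ^ 2 + 4 * g X * h X ^ 3 * sg (X i)
          + h X ^ 4 * (sg (X i) ^ 2 + 1)) * sg_mul_self (X i)
      simp only [this, expect_add_distrib, ← mul_expect]
      rw [expect_odd (fun X => by rw [hgi, hhi]), add_zero]
    have b1 := ih d g hg
    rcases Nat.eq_zero_or_pos d with hd | hd
    · have : h = 0 := h0 hd
      rw [e2, e4, this]
      simpa using b1
    · have b2 := ih (d - 1) h hh
      have cs : (𝔼 X, g X ^ 2 * h X ^ 2) ^ 2 ≤ (𝔼 X, (g X ^ 2) ^ 2) * 𝔼 X, (h X ^ 2) ^ 2 :=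
        expect_mul_sq_le_sq_mul_sq _ _ _
      simp only [← pow_mul] at cs
      norm_num at cs
      obtain ⟨k, rfl⟩ : ∃ k, d = k + 1 := ⟨d - 1, by omega⟩
      rw [Nat.add_sub_cancel] at b2
      rw [e2, e4]
      have hA : 0 ≤ 𝔼 X, g X ^ 2 := expect_nonneg fun X _ => sq_nonneg _
      have hB : 0 ≤ 𝔼 X, h X ^ 2 := expect_nonneg fun X _ => sq_nonneg _
      have hH : 0 ≤ 𝔼 X, h X ^ 4 := expect_nonneg fun X _ => by positivity
      have hM : (𝔼 X, g X ^ 2 * h X ^ 2) ≤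
          3 * 9 ^ k * ((𝔼 X, g X ^ 2) * 𝔼 X, h X ^ 2) := by
        apply le_of_sq_le_sq _ (by positivity)
        calc _ ≤ _ := cs
          _ ≤ _ := mul_le_mul b1 b2 hH (by positivity)
          _ = _ := by ring
      rw [pow_succ] at b1 ⊢
      have h9 : (0 : ℝ) < 9 ^ k := by positivity
      nlinarith [mul_nonneg h9.le (sq_nonneg (𝔼 X, h X ^ 2))]

/-- The reverse Hölder inequality between the first and second moments in degree at most `d`. -/
lemma l2_le_l1 {s : Finset (Fin N)} {d : ℕ} {f : (Fin N → Bool) → ℝ} (hf : f ∈ V s d) :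
    (𝔼 X, f X ^ 2) ≤ 9 ^ d * (𝔼 X, |f X|) ^ 2 := by
  have b := bonami s d f hf
  have hA : 0 ≤ 𝔼 X, f X ^ 2 := expect_nonneg fun X _ => sq_nonneg _
  have hL : 0 ≤ 𝔼 X, |f X| := expect_nonneg fun X _ => abs_nonneg _
  have c1 : (𝔼 X, f X ^ 2) ^ 2 ≤ (𝔼 X, |f X|) * 𝔼 X, |f X| ^ 3 := by
    have := expect_mul_sq_le_sq_mul_sq univ (fun X => √|f X|) (fun X => √|f X| ^ 3)
    have h1 : ∀ X, √|f X| * √|f X| ^ 3 = f X ^ 2 := fun X => by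
      rw [← sq_abs, ← Real.sq_sqrt (abs_nonneg (f X))]
      rw [Real.sqrt_sq (Real.sqrt_nonneg _)]; ring
    have h2 : ∀ X, (√|f X| ^ 3) ^ 2 = |f X| ^ 3 := fun X => by
      rw [← pow_mul, mul_comm, pow_mul, Real.sq_sqrt (abs_nonneg _)]
    simpa only [h1, h2, Real.sq_sqrt (abs_nonneg _)] using this
  have c2 : (𝔼 X, |f X| ^ 3) ^ 2 ≤ (𝔼 X, f X ^ 2) * 𝔼 X, f X ^ 4 := by
    have := expect_mul_sq_le_sq_mul_sq univ (fun X => |f X|) (fun X => |f X| ^ 2)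
    have h1 : ∀ X, |f X| * |f X| ^ 2 = |f X| ^ 3 := fun X => by ring
    have h2 : ∀ X, (|f X| ^ 2) ^ 2 = f X ^ 4 := fun X => by rw [sq_abs]; ring
    simp only [h1, h2] at this
    simpa only [sq_abs] using this
  rcases hA.eq_or_lt with h | h
  · rw [← h]; positivity
  set A := 𝔼 X, f X ^ 2
  set L := 𝔼 X, |f X|
  set M := 𝔼 X, |f X| ^ 3
  set F := 𝔼 X, f X ^ 4
  have key : A ^ 3 * A ≤ A ^ 3 * (9 ^ d * L ^ 2) := by
    calc A ^ 3 * A = (A ^ 2) ^ 2 := by ring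
      _ ≤ (L * M) ^ 2 := by gcongr
      _ = L ^ 2 * M ^ 2 := by ring
      _ ≤ L ^ 2 * (A * (9 ^ d * A ^ 2)) := by
        gcongr
        exact c2.trans (by gcongr)
      _ = _ := by ring
  exact le_of_mul_le_mul_left key (by positivity)

/-! ### Total sensitivity of bounded functions -/

/-- The interpolation polynomial: along the segment from `X` to `flip B X` inside the solid cube,
the multilinear extension of a degree-`d` function is a univariate polynomial of degree at
most `d`, whose values on `[0,1]` are averages of values of `f`. -/
lemma path_poly {d : ℕ} {f : (Fin N → Bool) → ℝ} (hf : f ∈ V univ d) (B : Finset (Fin N))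
    (X : Fin N → Bool) : ∃ q : Polynomial ℝ, q.natDegree ≤ d ∧
      (∀ t : ℝ, q.eval t = ∑ A ∈ B.powerset, t ^ #A * (1 - t) ^ (#B - #A) * f (flip A X)) ∧
      q.derivative.eval 0 = ∑ i ∈ B, (f (flip {i} X) - f X) := by
  induction hf using Submodule.span_induction with
  | mem x h =>
    obtain ⟨S, -, h2, rfl⟩ := h
    refine ⟨Polynomial.C (chi S X) * (1 - Polynomial.C 2 * Polynomial.X) ^ #(B ∩ S), ?_, ?_, ?_⟩
    · refine (Polynomial.natDegree_C_mul_le _ _).trans (Polynomial.natDegree_pow_le.trans ?_)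
      have h1 : (1 - Polynomial.C 2 * Polynomial.X : Polynomial ℝ).natDegree ≤ 1 := by
        compute_degree
      calc _ ≤ #(B ∩ S) * 1 := Nat.mul_le_mul_left _ h1
        _ ≤ d := by
          rw [mul_one]
          exact (card_le_card inter_subset_right).trans h2
    · intro t
      have hp := prod_add (fun i => t * if i ∈ S then (-1 : ℝ) else 1) (fun _ => 1 - t) B
      have hl : (∏ i ∈ B, ((t * if i ∈ S then (-1 : ℝ) else 1) + (1 - t)))
          = (1 - 2 * t) ^ #(B ∩ S) := by
        rw [← prod_const, ← prod_ite_mem]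
        refine prod_congr rfl fun i _ => ?_
        split_ifs <;> ring
      rw [hl] at hp
      simp only [Polynomial.eval_mul, Polynomial.eval_C, Polynomial.eval_pow, Polynomial.eval_sub,
        Polynomial.eval_one, Polynomial.eval_X]
      rw [hp, mul_sum]
      refine sum_congr rfl fun A hA => ?_
      rw [chi_flip, prod_mul_distrib, prod_const, prod_const, card_sdiff_of_subset (mem_powerset.1 hA)]
      have : (∏ i ∈ A, if i ∈ S then (-1 : ℝ) else 1) = ∏ i ∈ S, if i ∈ A then (-1 : ℝ) else 1 := by
        rw [prod_ite_mem, prod_ite_mem, inter_comm]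
      rw [this]
      ring
    · have hs : ∀ i, chi S (flip {i} X) - chi S X = chi S X * if i ∈ S then -2 else 0 := fun i => by
        rw [chi_flip]
        simp only [mem_singleton, prod_ite_eq']
        split_ifs <;> ring
      simp only [hs, ← mul_sum, sum_ite_mem, sum_const, nsmul_eq_mul]
      simp [Polynomial.derivative_pow]
  | zero => exact ⟨0, by simp, by simp, by simp⟩
  | add x y _ _ hx hy =>
    obtain ⟨p, h1, h2, h3⟩ := hx
    obtain ⟨q, k1, k2, k3⟩ := hy
    refine ⟨p + q, Polynomial.natDegree_add_le_of_degree_le h1 k1, fun t => ?_, ?_⟩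
    · rw [Polynomial.eval_add, h2, k2, ← sum_add_distrib]
      exact sum_congr rfl fun A _ => by simp only [Pi.add_apply]; ring
    · rw [Polynomial.derivative_add, Polynomial.eval_add, h3, k3, ← sum_add_distrib]
      exact sum_congr rfl fun A _ => by simp only [Pi.add_apply]; ring
  | smul a x _ hx =>
    obtain ⟨p, h1, h2, h3⟩ := hx
    refine ⟨Polynomial.C a * p, (Polynomial.natDegree_C_mul_le _ _).trans h1, fun t => ?_, ?_⟩
    · rw [Polynomial.eval_mul, Polynomial.eval_C, h2, mul_sum]
      exact sum_congr rfl fun A _ => by simp only [Pi.smul_apply, smul_eq_mul]; ring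
    · rw [Polynomial.derivative_C_mul, Polynomial.eval_mul, Polynomial.eval_C, h3, mul_sum]
      exact sum_congr rfl fun A _ => by simp only [Pi.smul_apply, smul_eq_mul]; ring

/-- Markov's inequality at the left endpoint of `[0,1]`, from the extremality of Chebyshev
polynomials for derivatives at `1`. -/
lemma markov_endpoint {d : ℕ} {q : Polynomial ℝ} (hq : q.natDegree ≤ d)
    (hb : ∀ t, 0 ≤ t → t ≤ 1 → |q.eval t| ≤ 1) : q.derivative.eval 0 ≤ 2 * (d : ℝ) ^ 2 := by
  set L : Polynomial ℝ := Polynomial.C (1 / 2) - Polynomial.C (1 / 2) * Polynomial.X with hL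
  have hLd : L.natDegree ≤ 1 := by rw [hL]; compute_degree
  have h := Polynomial.Chebyshev.eval_iterate_derivative_le_of_forall_abs_le_one (n := d)
    (P := -(q.comp L)) (k := 1) (x := 1) le_rfl ?_ ?_
  · simp only [Function.iterate_one, Polynomial.Chebyshev.derivative_T_eval_one] at h
    simp [Polynomial.derivative_comp, hL] at h
    norm_num at h
    linarith
  · rw [Polynomial.degree_neg]
    refine Polynomial.degree_le_of_natDegree_le (Polynomial.natDegree_comp_le.trans ?_)
    calc _ ≤ q.natDegree * 1 := Nat.mul_le_mul_left _ hLd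
      _ ≤ d := by omega
  · rintro x ⟨hx1, hx2⟩
    rw [Polynomial.eval_neg, abs_neg, Polynomial.eval_comp]
    apply hb <;> simp [hL] <;> linarith

/-- The endpoint Markov inequality applied to the path polynomial, which is bounded by `1` because
its values on `[0,1]` are convex combinations of values of `f`. -/
lemma one_sided {d : ℕ} {f : (Fin N → Bool) → ℝ} (hf : f ∈ V univ d)
    (hb : ∀ X, |f X| ≤ 1) (B : Finset (Fin N)) (X : Fin N → Bool) :
    ∑ i ∈ B, (f (flip {i} X) - f X) ≤ 2 * (d : ℝ) ^ 2 := by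
  obtain ⟨q, h1, h2, h3⟩ := path_poly hf B X
  rw [← h3]
  refine markov_endpoint h1 fun t h0 ht => ?_
  rw [h2]
  have ht' : 0 ≤ 1 - t := by linarith
  calc _ ≤ ∑ A ∈ B.powerset, |t ^ #A * (1 - t) ^ (#B - #A) * f (flip A X)| :=
        abs_sum_le_sum_abs _ _
    _ ≤ ∑ A ∈ B.powerset, t ^ #A * (1 - t) ^ (#B - #A) := by
        refine sum_le_sum fun A _ => ?_
        have : 0 ≤ t ^ #A * (1 - t) ^ (#B - #A) := by positivity
        rw [abs_mul, abs_of_nonneg this]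
        exact mul_le_of_le_one_right this (hb _)
    _ = 1 := by rw [sum_pow_mul_eq_add_pow]; simp

/-- A bounded function of degree at most `d` has total pointwise sensitivity `O(d²)`. -/
lemma sensitivity {d : ℕ} {f : (Fin N → Bool) → ℝ} (hf : f ∈ V univ d)
    (hb : ∀ X, |f X| ≤ 1) (X : Fin N → Bool) :
    ∑ i, |f (flip {i} X) - f X| ≤ 4 * (d : ℝ) ^ 2 := by
  have h1 := one_sided hf hb {i | 0 ≤ f (flip {i} X) - f X} X
  have h2 := one_sided (f := -f) (Submodule.neg_mem _ hf) (by simpa using hb)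
    {i | ¬ 0 ≤ f (flip {i} X) - f X} X
  rw [← sum_filter_add_sum_filter_not univ (fun i => 0 ≤ f (flip {i} X) - f X)]
  have e1 : ∑ i with 0 ≤ f (flip {i} X) - f X, |f (flip {i} X) - f X|
      = ∑ i with 0 ≤ f (flip {i} X) - f X, (f (flip {i} X) - f X) :=
    sum_congr rfl fun i hi => abs_of_nonneg (mem_filter.1 hi).2
  have e2 : ∑ i with ¬ 0 ≤ f (flip {i} X) - f X, |f (flip {i} X) - f X|
      = ∑ i with ¬ 0 ≤ f (flip {i} X) - f X, ((-f) (flip {i} X) - (-f) X) :=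
    sum_congr rfl fun i hi => by
      rw [abs_of_neg (not_le.1 (mem_filter.1 hi).2)]
      simp only [Pi.neg_apply]
      ring
  rw [e1, e2]
  linarith

/-! ### Junta approximation -/

/-- The Efron–Stein inequality: averaging `f` over the coordinates in `R` costs, in squared `L²`
distance, at most the sum of the influences of these coordinates. -/
lemma efron_stein (f : (Fin N → Bool) → ℝ) (R : Finset (Fin N)) :
    ∃ g : (Fin N → Bool) → ℝ, (∀ i ∈ R, ∀ X, g (flip {i} X) = g X) ∧
      (𝔼 X, (f X - g X) ^ 2) ≤ ∑ i ∈ R, 𝔼 X, (f (flip {i} X) - f X) ^ 2 := by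
  induction R using Finset.induction_on with
  | empty => exact ⟨f, by simp, by simp⟩
  | insert i R hi ih =>
    obtain ⟨g, hg, hE⟩ := ih
    refine ⟨fun X => (g X + g (flip {i} X)) / 2, ?_, ?_⟩
    · intro j hj X
      simp only
      rcases mem_insert.1 hj with rfl | hj
      · rw [flip_invol, add_comm]
      · rw [flip_comm {i} {j}, hg j hj, hg j hj]
    · rw [sum_insert hi]
      -- Summing over the pair `X`, `flip {i} X` makes the cross term between the part of the error
      -- that is odd under the flip and the part that is even disappear.
      have key : ∀ X, (f X - (g X + g (flip {i} X)) / 2) ^ 2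
          + (f (flip {i} X) - (g X + g (flip {i} X)) / 2) ^ 2
          ≤ (f (flip {i} X) - f X) ^ 2 + (f (flip {i} X) - f X) ^ 2
            + (f X - g X) ^ 2 + (f (flip {i} X) - g (flip {i} X)) ^ 2 := fun X => by
        nlinarith [sq_nonneg (f (flip {i} X) - f X),
          sq_nonneg ((f X - g X) - (f (flip {i} X) - g (flip {i} X)))]
      have hs := expect_le_expect (s := univ) fun X (_ : X ∈ univ) => key X
      simp only [expect_add_distrib] at hs
      have e1 := expect_flip {i} (fun X => (f X - (g X + g (flip {i} X)) / 2) ^ 2)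
      have e2 := expect_flip {i} (fun X => (f X - g X) ^ 2)
      simp only [flip_invol {i} _] at e1
      simp only [add_comm (g (flip {i} _)) (g _)] at e1
      linarith

/-- Invariance under single flips in `R` means dependence on the complement of `R` only: `X` is
taken to `Y` by flipping the coordinates where they differ, one at a time. -/
lemma depends_only {g : (Fin N → Bool) → ℝ} {R : Finset (Fin N)}
    (hg : ∀ i ∈ R, ∀ X, g (flip {i} X) = g X) {X Y : Fin N → Bool}
    (h : ∀ i ∈ Rᶜ, X i = Y i) : g X = g Y := by
  have hA : ∀ A ⊆ R, g (flip A X) = g X := fun A => by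
    induction A using Finset.induction_on with
    | empty =>
      intro _
      congr 1
      funext i
      simp [flip]
    | insert i A hi ih =>
      intro hA
      have : flip (insert i A) X = flip {i} (flip A X) := by
        funext j
        by_cases hj : j = i
        · subst hj; simp [flip, hi]
        · simp [flip, hj]
      rw [this, hg i (hA (mem_insert_self _ _)), ih ((subset_insert _ _).trans hA)]
  have := hA {i | X i ≠ Y i} fun i hi => by
    by_contra hR
    exact (mem_filter.1 hi).2 (h i (mem_compl.2 hR))
  rw [← this]
  congr 1
  funext i
  cases hX : X i <;> cases hY : Y i <;> simp [flip, hX, hY]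

/-- The junta approximation in `L²`: for a bounded function of degree at most `d` the
coordinates of `L¹`-influence at least `τ` form a junta that captures `f`. -/
lemma junta {d : ℕ} {f : (Fin N → Bool) → ℝ} (hf : f ∈ V univ d)
    (hb : ∀ X, |f X| ≤ 1) {τ : ℝ} (hτ : 0 < τ) :
    ∃ (S : Finset (Fin N)) (g : (Fin N → Bool) → ℝ),
      #S * τ ≤ 4 * (d : ℝ) ^ 2 ∧ (∀ X Y : Fin N → Bool, (∀ i ∈ S, X i = Y i) → g X = g Y) ∧
      (𝔼 X, (f X - g X) ^ 2) ≤ 9 ^ d * τ * (4 * (d : ℝ) ^ 2) := by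
  set a : Fin N → ℝ := fun i => 𝔼 X, |f (flip {i} X) - f X| with ha
  have ha0 : ∀ i, 0 ≤ a i := fun i => expect_nonneg fun X _ => abs_nonneg _
  have hK : ∑ i, a i ≤ 4 * (d : ℝ) ^ 2 := by
    rw [ha, ← expect_sum_comm]
    exact expect_le univ_nonempty fun X _ => sensitivity hf hb X
  have hsub : ∀ R : Finset (Fin N), ∑ i ∈ R, a i ≤ 4 * (d : ℝ) ^ 2 := fun R =>
    (sum_le_univ_sum_of_nonneg ha0).trans hK
  obtain ⟨g, hg, hE⟩ := efron_stein f {i | a i < τ}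
  refine ⟨({i | a i < τ} : Finset (Fin N))ᶜ, g, ?_, fun X Y h => depends_only hg h, hE.trans ?_⟩
  · refine le_trans ?_ (hsub ({i | a i < τ} : Finset (Fin N))ᶜ)
    rw [← nsmul_eq_mul]
    refine card_nsmul_le_sum _ _ _ fun i hi => ?_
    simpa using hi
  · calc _ ≤ ∑ i with a i < τ, 9 ^ d * τ * a i := sum_le_sum fun i hi => by
          have hi : a i < τ := (mem_filter.1 hi).2
          have hD : (fun X => f (flip {i} X) - f X) ∈ V univ d :=
            Submodule.sub_mem _ (V_flip hf {i}) hf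
          refine (l2_le_l1 hD).trans ?_
          change 9 ^ d * a i ^ 2 ≤ _
          have := mul_le_mul_of_nonneg_right hi.le (ha0 i)
          rw [mul_assoc, sq]
          gcongr
      _ = 9 ^ d * τ * ∑ i with a i < τ, a i := by rw [mul_sum]
      _ ≤ _ := by gcongr; exact hsub _

/-- Chebyshev's inequality, stated as a count of points of the cube. -/
lemma chebyshev (u : (Fin N → Bool) → ℝ) {α δ : ℝ} (hα : 0 < α)
    (h : (𝔼 X, u X ^ 2) ≤ α ^ 2 * δ) :
    (1 - δ) * 2 ^ N ≤ (Nat.card {X : Fin N → Bool // |u X| ≤ α} : ℝ) := by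
  have hc : (Nat.card {X : Fin N → Bool // |u X| ≤ α} : ℝ)
      = ∑ X : Fin N → Bool, if |u X| ≤ α then (1 : ℝ) else 0 := by
    rw [Nat.card_eq_fintype_card, Fintype.card_subtype]
    simp
  have hs : α ^ 2 * (2 ^ N - ∑ X : Fin N → Bool, if |u X| ≤ α then (1 : ℝ) else 0)
      ≤ ∑ X, u X ^ 2 := by
    have : (2 ^ N : ℝ) = ∑ X : Fin N → Bool, 1 := by simp
    rw [this, ← sum_sub_distrib, mul_sum]
    refine sum_le_sum fun X _ => ?_
    split_ifs with hX
    · simp only [sub_self, mul_zero]; positivity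
    · rw [← sq_abs (u X)]
      have := not_le.1 hX
      nlinarith
  rw [Fintype.expect_eq_sum_div_card, div_le_iff₀ (by simp)] at h
  simp only [Fintype.card_pi, Fintype.card_bool, prod_const, card_univ, Fintype.card_fin,
    Nat.cast_pow, Nat.cast_ofNat] at h
  rw [hc]
  have : α ^ 2 * (2 ^ N - ∑ X : Fin N → Bool, if |u X| ≤ α then (1 : ℝ) else 0)
      ≤ α ^ 2 * (δ * 2 ^ N) := by linarith
  have := le_of_mul_le_mul_left this (by positivity)
  linarith

/-! ### The polynomial method for query algorithms -/

variable {W : ℕ}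

/-- Complex-valued functions on the cube whose real and imaginary parts have degree at
most `d`. -/
def CV (d : ℕ) (g : (Fin N → Bool) → ℂ) : Prop :=
  (fun X => (g X).re) ∈ V univ d ∧ (fun X => (g X).im) ∈ V univ d

lemma CV_mulVec {d : ℕ} (M : Matrix (Fin N × Fin W) (Fin N × Fin W) ℂ)
    {v : (Fin N → Bool) → (Fin N × Fin W) → ℂ} (hv : ∀ p, CV d fun X => v X p)
    (p : Fin N × Fin W) : CV d fun X => M.mulVec (v X) p := by
  constructor
  · have : (fun X => (M.mulVec (v X) p).re)
        = ∑ q, ((M p q).re • (fun X => (v X q).re) - (M p q).im • fun X => (v X q).im) := by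
      funext X
      simp [Matrix.mulVec, dotProduct, Finset.sum_apply]
    rw [this]
    exact Submodule.sum_mem _ fun q _ => Submodule.sub_mem _
      (Submodule.smul_mem _ _ (hv q).1) (Submodule.smul_mem _ _ (hv q).2)
  · have : (fun X => (M.mulVec (v X) p).im)
        = ∑ q, ((M p q).re • (fun X => (v X q).im) + (M p q).im • fun X => (v X q).re) := by
      funext X
      simp [Matrix.mulVec, dotProduct, Finset.sum_apply]
    rw [this]
    exact Submodule.sum_mem _ fun q _ => Submodule.add_mem _
      (Submodule.smul_mem _ _ (hv q).2) (Submodule.smul_mem _ _ (hv q).1)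

lemma const_mem (s : Finset (Fin N)) (c : ℝ) : (fun _ => c) ∈ V s 0 := by
  have : (fun _ => c) = c • chi (∅ : Finset (Fin N)) := by
    funext X
    simp [chi]
  rw [this]
  exact Submodule.smul_mem _ _ (chi_mem (empty_subset _) (by simp))

lemma sg_mem (i : Fin N) : (fun X : Fin N → Bool => sg (X i)) ∈ V univ 1 := by
  have : (fun X : Fin N → Bool => sg (X i)) = chi {i} := by
    funext X
    simp [chi]
  rw [this]
  exact chi_mem (subset_univ _) (by simp)

lemma CV_oracle {d : ℕ} {v : (Fin N → Bool) → (Fin N × Fin W) → ℂ}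
    (hv : ∀ p, CV d fun X => v X p) (p : Fin N × Fin W) :
    CV (d + 1) fun X => (phaseOracle X).mulVec (v X) p := by
  have h : ∀ X, (phaseOracle X).mulVec (v X) p = (sg (X p.1) : ℂ) * v X p := fun X => by
    rw [phaseOracle, Matrix.mulVec_diagonal]
    cases X p.1 <;> simp [sg]
  simp only [h, CV, Complex.re_ofReal_mul, Complex.im_ofReal_mul]
  rw [add_comm d 1]
  exact ⟨V_mul (sg_mem p.1) (hv p).1, V_mul (sg_mem p.1) (hv p).2⟩

lemma CV_state (A : BAlg N W) (t : ℕ) : ∀ p, CV t fun X => A.state X t p := by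
  induction t with
  | zero =>
    intro p
    exact ⟨const_mem _ ((A.U 0).mulVec A.init p).re, const_mem _ ((A.U 0).mulVec A.init p).im⟩
  | succ t ih => exact CV_mulVec _ (CV_oracle ih)

/-- The polynomial method: the acceptance probability after `T` queries has degree at
most `2T`. -/
lemma acc_mem (A : BAlg N W) (T : ℕ) : A.acc T ∈ V univ (2 * T) := by
  have : A.acc T = ∑ p,
      ((fun X => (A.proj.mulVec (A.state X T) p).re) * (fun X => (A.proj.mulVec (A.state X T) p).re)
      + (fun X => (A.proj.mulVec (A.state X T) p).im)
        * fun X => (A.proj.mulVec (A.state X T) p).im) := by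
    funext X
    simp [BAlg.acc, Complex.normSq_apply, Finset.sum_apply]
  rw [this, two_mul]
  refine Submodule.sum_mem _ fun p _ => ?_
  have h := CV_mulVec A.proj (CV_state A T) p
  exact Submodule.add_mem _ (V_mul h.1 h.1) (V_mul h.2 h.2)

lemma ofReal_normSq_sum {ι : Type*} [Fintype ι] (v : ι → ℂ) :
    ((∑ p, Complex.normSq (v p) : ℝ) : ℂ) = star v ⬝ᵥ v := by
  simp [dotProduct, Complex.normSq_eq_conj_mul_self]

lemma normSq_mulVec {ι : Type*} [Fintype ι] (M : Matrix ι ι ℂ) (v : ι → ℂ) :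
    ((∑ p, Complex.normSq (M.mulVec v p) : ℝ) : ℂ)
      = star v ⬝ᵥ (M.conjTranspose * M).mulVec v := by
  rw [ofReal_normSq_sum, Matrix.star_mulVec, ← Matrix.dotProduct_mulVec, Matrix.mulVec_mulVec]

lemma unitary_normSq {ι : Type*} [Fintype ι] [DecidableEq ι] {M : Matrix ι ι ℂ}
    (hM : M.conjTranspose * M = 1) (v : ι → ℂ) :
    ∑ p, Complex.normSq (M.mulVec v p) = ∑ p, Complex.normSq (v p) := by
  have h := normSq_mulVec M v
  rw [hM, Matrix.one_mulVec, ← ofReal_normSq_sum] at h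
  exact_mod_cast h

lemma state_norm (A : BAlg N W) (X : Fin N → Bool) (t : ℕ) :
    ∑ p, Complex.normSq (A.state X t p) = 1 := by
  have hU : ∀ t, (A.U t).conjTranspose * A.U t = 1 := fun t =>
    (Matrix.mem_unitaryGroup_iff'.1 (A.U_unitary t))
  induction t with
  | zero => exact (unitary_normSq (hU 0) _).trans A.init_norm
  | succ t ih =>
    refine (unitary_normSq (hU _) _).trans (Eq.trans ?_ ih)
    refine sum_congr rfl fun p _ => ?_
    rw [phaseOracle, Matrix.mulVec_diagonal]
    split_ifs <;> simp

/-- Acceptance probabilities lie in `[0,1]`; the absolute value is the form used later. -/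
lemma acc_bound (A : BAlg N W) (T : ℕ) (X : Fin N → Bool) : |A.acc T X| ≤ 1 := by
  have h0 : 0 ≤ A.acc T X := sum_nonneg fun p _ => Complex.normSq_nonneg _
  rw [abs_of_nonneg h0]
  -- Pythagoras for the complementary projection `1 - Π`.
  have h1 : 0 ≤ ∑ p, Complex.normSq ((1 - A.proj).mulVec (A.state X T) p) :=
    sum_nonneg fun p _ => Complex.normSq_nonneg _
  have h2 : ∑ p, Complex.normSq ((1 - A.proj).mulVec (A.state X T) p)
      = 1 - A.acc T X := by
    have e1 := normSq_mulVec (1 - A.proj) (A.state X T)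
    have e2 := normSq_mulVec A.proj (A.state X T)
    have e3 := ofReal_normSq_sum (A.state X T)
    have hp : (1 - A.proj).conjTranspose * (1 - A.proj) = 1 - A.proj := by
      rw [Matrix.conjTranspose_sub, Matrix.conjTranspose_one, A.proj_herm.eq]
      rw [mul_sub, sub_mul, sub_mul, A.proj_idem]
      simp
    rw [A.proj_herm.eq, A.proj_idem] at e2
    have e4 : ((∑ p, Complex.normSq ((1 - A.proj).mulVec (A.state X T) p) : ℝ) : ℂ)
        = ((1 - A.acc T X : ℝ) : ℂ) := by
      rw [e1, hp, Matrix.sub_mulVec, Matrix.one_mulVec, dotProduct_sub, ← e2, ← e3, state_norm,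
        BAlg.acc, Complex.ofReal_sub]
    exact_mod_cast e4
  linarith

/-! ### Numerical estimate -/

lemma four_sq_le (d : ℕ) : 4 * (d : ℝ) ^ 2 ≤ 16 ^ d := by
  rcases Nat.eq_zero_or_pos d with rfl | hd
  · simp
  · have h1 : (d : ℝ) ≤ 2 ^ d := by exact_mod_cast d.lt_two_pow_self.le
    have h2 : (4 : ℝ) ≤ 4 ^ d := le_self_pow₀ (by norm_num) (by omega)
    calc 4 * (d : ℝ) ^ 2 ≤ 4 ^ d * (2 ^ d) ^ 2 := by gcongr
      _ = 16 ^ d := by rw [← pow_mul, mul_comm d 2, pow_mul, ← mul_pow]; norm_num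

end QJunta

/-- there is a universal constant `C` such that any `T`-query quantum
algorithm's acceptance probability can be `α`-approximated, on a `1−δ` fraction of inputs,
by a function depending on at most `2^{CT}/(α⁴δ⁴)` coordinates. -/
theorem quantum_simulation_by_junta :
    ∃ C : ℝ, 0 < C ∧
      ∀ (N W T : ℕ) (A : BAlg N W) (α δ : ℝ), 0 < α → α < 1 → 0 < δ → δ < 1 →
        ∃ (S : Finset (Fin N)) (pt : (Fin N → Bool) → ℝ),
          (S.card : ℝ) ≤ 2 ^ (C * T) / (α ^ 4 * δ ^ 4) ∧
          (∀ X Y : Fin N → Bool, (∀ i ∈ S, X i = Y i) → pt X = pt Y) ∧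
          (1 - δ) * 2 ^ N ≤
            (Nat.card {X : Fin N → Bool // |pt X - A.acc T X| ≤ α} : ℝ) := by
  classical
  refine ⟨23, by norm_num, fun N W T A α δ hα hα1 hδ hδ1 => ?_⟩
  have h16 := QJunta.four_sq_le (2 * T)
  -- The threshold makes `9 ^ d * τ * 16 ^ d = α² δ` for `d = 2T`.
  set τ : ℝ := α ^ 2 * δ / (9 ^ (2 * T) * 16 ^ (2 * T)) with hτdef
  have hτ : 0 < τ := by positivity
  obtain ⟨S, g, hS, hg, hE⟩ := QJunta.junta (QJunta.acc_mem A T) (QJunta.acc_bound A T) hτ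
  refine ⟨S, g, ?_, hg, ?_⟩
  · have hC : (2 : ℝ) ^ ((23 : ℝ) * T) = (2 ^ 23) ^ T := by
      rw [Real.rpow_mul (by norm_num), Real.rpow_natCast]
      norm_num
    rw [hC]
    have h1 : (S.card : ℝ) ≤ 16 ^ (2 * T) / τ := by
      rw [le_div_iff₀ hτ]
      exact hS.trans h16
    have h2 : (16 : ℝ) ^ (2 * T) / τ = (16 ^ 2 * 9 ^ 2 * 16 ^ 2) ^ T / (α ^ 2 * δ) := by
      rw [hτdef]
      field_simp
      simp only [pow_mul]
      norm_num
      rw [← pow_mul, mul_comm T 2, pow_mul, ← mul_pow]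
      norm_num
    have h3 : α ^ 4 * δ ^ 4 ≤ α ^ 2 * δ := by
      have := pow_le_pow_of_le_one hα.le hα1.le (show 2 ≤ 4 by norm_num)
      have := pow_le_of_le_one hδ.le hδ1.le (show 4 ≠ 0 by norm_num)
      gcongr
    calc (S.card : ℝ) ≤ (16 ^ 2 * 9 ^ 2 * 16 ^ 2) ^ T / (α ^ 2 * δ) := h2 ▸ h1
      _ ≤ (2 ^ 23) ^ T / (α ^ 4 * δ ^ 4) := by
        gcongr
        norm_num
  · have := QJunta.chebyshev (fun X => g X - A.acc T X) (δ := δ) hα ?_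
    · exact this
    · have hsq : ∀ X, (g X - A.acc T X) ^ 2 = (A.acc T X - g X) ^ 2 := fun X => by ring
      simp only [hsq]
      refine hE.trans ?_
      calc _ ≤ 9 ^ (2 * T) * τ * 16 ^ (2 * T) := by gcongr
        _ = α ^ 2 * δ := by
          rw [hτdef]
          field_simp
end
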